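/- Let n ≥ 2, let c, x ∈ ℝⁿ and r, p > 0 with |c − x| > p + r, and let w ∈ ℝⁿ with |w| = 1. Then there exists b ∈ ℝ such that H[w;b] separates B[c,r] and B[x,p] if and only if |⟪w, c − x⟫| ≥ p + r. -/

import Mathlib

open MeasureTheory Metric Real
open scoped RealInnerProductSpace

/-- `H[w;b]` separates `B[c,r]` and `B[x,p]`: the linear functional `u ↦ ⟪w,u⟫ - b`
is positive on one open ball and negative on the other. -/
def Separates {n : ℕ} (w : EuclideanSpace ℝ (Fin n)) (b : ℝ)
    (c : EuclideanSpace ℝ (Fin n)) (r : ℝ)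
    (x : EuclideanSpace ℝ (Fin n)) (p : ℝ) : Prop :=
  ((∀ u ∈ ball c r, 0 < ⟪w, u⟫ - b) ∧ (∀ u ∈ ball x p, ⟪w, u⟫ - b < 0)) ∨
  ((∀ u ∈ ball c r, ⟪w, u⟫ - b < 0) ∧ (∀ u ∈ ball x p, 0 < ⟪w, u⟫ - b))

/-- An affine functional with unit normal is positive on a ball iff its value at the
center is at least the radius. -/
lemma pos_on_ball_iff {n : ℕ} (w : EuclideanSpace ℝ (Fin n)) (hw : ‖w‖ = 1) (b : ℝ)
    (c : EuclideanSpace ℝ (Fin n)) (r : ℝ) (hr : 0 < r) :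
    (∀ u ∈ ball c r, 0 < ⟪w, u⟫ - b) ↔ r ≤ ⟪w, c⟫ - b := by
  constructor
  · intro h
    by_contra! hlt
    have h0 := h c (mem_ball_self hr)
    have h1 := h (c - (⟪w, c⟫ - b) • w) (by
      rw [mem_ball, dist_eq_norm, sub_sub_cancel_left, norm_neg, norm_smul, hw, mul_one,
        Real.norm_eq_abs, abs_of_pos h0]
      exact hlt)
    rw [inner_sub_right, inner_smul_right, real_inner_self_eq_norm_sq, hw] at h1
    linarith
  · intro h u hu
    rw [mem_ball', dist_eq_norm] at hu
    have h1 := real_inner_le_norm w (c - u)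
    rw [hw, one_mul, inner_sub_right] at h1
    linarith

lemma neg_on_ball_iff {n : ℕ} (w : EuclideanSpace ℝ (Fin n)) (hw : ‖w‖ = 1) (b : ℝ)
    (c : EuclideanSpace ℝ (Fin n)) (r : ℝ) (hr : 0 < r) :
    (∀ u ∈ ball c r, ⟪w, u⟫ - b < 0) ↔ r ≤ b - ⟪w, c⟫ := by
  have h := pos_on_ball_iff (-w) (by rwa [norm_neg]) (-b) c r hr
  simp only [inner_neg_left] at h
  constructor
  · intro h1
    have := h.1 (fun u hu => by linarith [h1 u hu])
    linarith
  · intro h1 u hu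
    have := h.2 (by linarith) u hu
    linarith

theorem stmt5 (n : ℕ) (hn : 2 ≤ n) (c x : EuclideanSpace ℝ (Fin n)) (r p : ℝ)
    (hr : 0 < r) (hp : 0 < p) (hdist : p + r < ‖c - x‖)
    (w : EuclideanSpace ℝ (Fin n)) (hw : ‖w‖ = 1) :
    (∃ b : ℝ, Separates w b c r x p) ↔ p + r ≤ |⟪w, c - x⟫| := by
  simp only [Separates, pos_on_ball_iff w hw _ _ _ hr, pos_on_ball_iff w hw _ _ _ hp,
    neg_on_ball_iff w hw _ _ _ hr, neg_on_ball_iff w hw _ _ _ hp, inner_sub_right, le_abs]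
  constructor
  · rintro ⟨b, ⟨h1, h2⟩ | ⟨h1, h2⟩⟩
    · left; linarith
    · right; linarith
  · rintro (h | h)
    · exact ⟨⟪w, x⟫ + p, Or.inl ⟨by linarith, by linarith⟩⟩
    · exact ⟨⟪w, x⟫ - p, Or.inr ⟨by linarith, by linarith⟩⟩
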